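/- Let Σ̃ = (Σ_c, Σ_r, Σ_l) be a pushdown alphabet partitioning 2^P and let A_st be the test-free TVPA with two states q_0 (initial, non-final) and q_1 (final), one stack symbol A besides ⊥, and the following transitions: from q_0, every call pushes A and stays in q_0, every return popping A stays in q_0, every local action stays in q_0, and every return popping ⊥ moves to q_1. Then for every infinite word α over 2^P and every position k: (α, k) ⊨ [A_st]ff if and only if for every l ≥ k the number of call letters among α_k⋯α_l is at least the number of return letters among α_k⋯α_l (equivalently, no nonempty finite prefix of the suffix α_kα_{k+1}⋯ ends with an unmatched return). -/

import Mathlib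

/-!
While `A_st` stays in its initial state, its stack height after reading `α_k ⋯ α_{i-1}` is the
number of calls minus the number of returns read so far (`run_invariant`). The final state is
entered exactly by a return read on the empty stack, which is a return that makes the returns
outnumber the calls. So an accepting run exhibits a violation of the counting condition
(`lt_of_run`). Conversely, up to the *first* violation the difference of the two counts is never
negative, and taking it as the stack height defines an accepting run (`run_of_first`).
-/

/-- The three kinds of letters of a pushdown alphabet: calls, returns, local actions. -/
inductive SymKind : Type
  | call | ret | loc
deriving DecidableEq

/-- The data of a visibly pushdown automaton with states `Fin n` and stack alphabet
`Fin m` (plus an implicit bottom marker `⊥`, represented by the empty stack):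
call-, return- and local transitions, initial states and final states. -/
structure VPAData (A : Type) (n m : ℕ) where
  callΔ : Fin n → A → Fin n → Fin m → Bool
  retΔ  : Fin n → A → Option (Fin m) → Fin n → Bool
  locΔ  : Fin n → A → Fin n → Bool
  start : Fin n → Bool
  final : Fin n → Bool

/-- One step of a visibly pushdown system on configurations (state, stack). Calls push,
returns pop (reading `⊥`, i.e. `none`, on the empty stack and leaving it unchanged),
local actions leave the stack unchanged. -/
def vstep {A : Type} (kind : A → SymKind) {n m : ℕ}
    (callΔ : Fin n → A → Fin n → Fin m → Bool)
    (retΔ : Fin n → A → Option (Fin m) → Fin n → Bool)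
    (locΔ : Fin n → A → Fin n → Bool) :
    Fin n × List (Fin m) → A → Fin n × List (Fin m) → Prop :=
  fun c a c' =>
    match kind a with
    | .call => ∃ g, callΔ c.1 a c'.1 g = true ∧ c'.2 = g :: c.2
    | .ret => (∃ g s, c.2 = g :: s ∧ retΔ c.1 a (some g) c'.1 = true ∧ c'.2 = s) ∨
        (c.2 = [] ∧ retΔ c.1 a none c'.1 = true ∧ c'.2 = [])
    | .loc => locΔ c.1 a c'.1 = true ∧ c'.2 = c.2

def VPAData.step {A : Type} {n m : ℕ} (M : VPAData A n m) (kind : A → SymKind) :=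
  vstep kind M.callΔ M.retΔ M.locΔ

/-- Büchi acceptance for a visibly pushdown automaton: some initial infinite run
starting with empty stack visits final states infinitely often. -/
def VPAData.BuchiAccepts {A : Type} {n m : ℕ} (M : VPAData A n m) (kind : A → SymKind)
    (α : ℕ → A) : Prop :=
  ∃ ρ : ℕ → Fin n × List (Fin m),
    M.start (ρ 0).1 = true ∧ (ρ 0).2 = [] ∧
    (∀ i, M.step kind (ρ i) (α i) (ρ (i+1))) ∧
    (∀ i, ∃ j, i ≤ j ∧ M.final (ρ j).1 = true)

/-- VLDL formulas: atoms (from `V`), Boolean connectives, and temporal operators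
`⟨A⟩φ`/`[A]φ` guarded by testing visibly pushdown automata over the alphabet `A`;
the guard is given by its `VPAData` together with the map `t` assigning a test
formula to every state. -/
inductive VLDL (V A : Type) : Type
  | atom (v : V)
  | neg (φ : VLDL V A)
  | and (φ ψ : VLDL V A)
  | or (φ ψ : VLDL V A)
  | dia (n m : ℕ) (M : VPAData A n m) (t : Fin n → VLDL V A) (φ : VLDL V A)
  | box (n m : ℕ) (M : VPAData A n m) (t : Fin n → VLDL V A) (φ : VLDL V A)

/-- Satisfaction of VLDL formulas on infinite words `α : ℕ → A` at a position `k`,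
where `val v a` states that atom `v` holds at letter `a`. The guard relation
`(k, l) ∈ R_A(α)` is inlined: there is an initial accepting run of the guard on
`α_k ⋯ α_{l-1}` all of whose states' tests are satisfied at the respective positions. -/
def VLDL.sat {V A : Type} (val : V → A → Prop) (kind : A → SymKind) :
    VLDL V A → (ℕ → A) → ℕ → Prop
  | .atom v, α, k => val v (α k)
  | .neg φ, α, k => ¬ VLDL.sat val kind φ α k
  | .and φ ψ, α, k => VLDL.sat val kind φ α k ∧ VLDL.sat val kind ψ α k
  | .or φ ψ, α, k => VLDL.sat val kind φ α k ∨ VLDL.sat val kind ψ α k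
  | .dia n m M t φ, α, k => ∃ l, k ≤ l ∧
      (∃ ρ : ℕ → Fin n × List (Fin m),
        M.start (ρ k).1 = true ∧ (ρ k).2 = [] ∧
        (∀ i, k ≤ i → i < l → M.step kind (ρ i) (α i) (ρ (i+1))) ∧
        M.final (ρ l).1 = true ∧
        (∀ i, k ≤ i → i ≤ l → VLDL.sat val kind (t (ρ i).1) α i)) ∧
      VLDL.sat val kind φ α l
  | .box n m M t φ, α, k => ∀ l, k ≤ l →
      (∃ ρ : ℕ → Fin n × List (Fin m),
        M.start (ρ k).1 = true ∧ (ρ k).2 = [] ∧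
        (∀ i, k ≤ i → i < l → M.step kind (ρ i) (α i) (ρ (i+1))) ∧
        M.final (ρ l).1 = true ∧
        (∀ i, k ≤ i → i ≤ l → VLDL.sat val kind (t (ρ i).1) α i)) →
      VLDL.sat val kind φ α l

/-- The size of a VLDL formula: the number of subformulas (including the tests of all
guard automata) plus the total number of states of all guard automata. -/
def VLDL.size {V A : Type} : VLDL V A → ℕ
  | .atom _ => 1
  | .neg φ => φ.size + 1
  | .and φ ψ => φ.size + ψ.size + 1
  | .or φ ψ => φ.size + ψ.size + 1
  | .dia n _ _ t φ => φ.size + n + 1 + (List.ofFn (fun q => (t q).size)).sum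
  | .box n _ _ t φ => φ.size + n + 1 + (List.ofFn (fun q => (t q).size)).sum

/-- A trivially true VLDL formula. -/
def ttF (V A : Type) [Inhabited V] : VLDL V A :=
  VLDL.or (VLDL.atom default) (VLDL.neg (VLDL.atom default))

/-- An unsatisfiable VLDL formula `ff`. -/
def ffF (V A : Type) [Inhabited V] : VLDL V A :=
  VLDL.and (VLDL.atom default) (VLDL.neg (VLDL.atom default))

/-- The fixed two-state automaton `A_st` accepting exactly the nonempty finite words
whose last letter is an unmatched return: state `q₀ = 0` (initial) loops on all letters,
pushing/popping the single stack symbol, and reading a return on the empty stack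
(i.e., popping `⊥`) moves to the final state `q₁ = 1`. -/
def AstData (A : Type) : VPAData A 2 1 where
  callΔ := fun q _ q' _ => decide (q = 0 ∧ q' = 0)
  retΔ := fun q _ og q' =>
    decide (q = 0 ∧ ((og = some 0 ∧ q' = 0) ∨ (og = none ∧ q' = 1)))
  locΔ := fun q _ q' => decide (q = 0 ∧ q' = 0)
  start := fun q => decide (q = 0)
  final := fun q => decide (q = 1)

/-- The formula `φ_st = [A_st]ff`, which holds at a position `k` of `α` iff `k` is a
step of `α`. -/
def phiSt (V A : Type) [Inhabited V] : VLDL V A :=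
  VLDL.box 2 1 (AstData A) (fun _ => ttF V A) (ffF V A)

/-- The number of positions `i` with `k ≤ i < n` at which `α` has a letter of kind `x`. -/
def kindCount {A : Type} (kind : A → SymKind) (α : ℕ → A) (x : SymKind) (k n : ℕ) : ℕ :=
  ((Finset.Ico k n).filter (fun i => kind (α i) = x)).card

theorem kindCount_self {A : Type} (kind : A → SymKind) (α : ℕ → A) (x : SymKind) (k : ℕ) :
    kindCount kind α x k k = 0 := by
  simp [kindCount]

theorem kindCount_succ {A : Type} (kind : A → SymKind) (α : ℕ → A) (x : SymKind) {k n : ℕ}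
    (h : k ≤ n) :
    kindCount kind α x k (n + 1) =
      kindCount kind α x k n + if kind (α n) = x then 1 else 0 := by
  unfold kindCount
  rw [Finset.card_filter, Finset.card_filter, Finset.sum_Ico_succ_top h]

theorem kindCount_Icc {A : Type} (kind : A → SymKind) (α : ℕ → A) (x : SymKind) (k l : ℕ) :
    ((Finset.Icc k l).filter (fun i => kind (α i) = x)).card = kindCount kind α x k (l + 1) := by
  unfold kindCount
  congr 2

theorem sat_ttF {V A : Type} [Inhabited V] (val : V → A → Prop) (kind : A → SymKind)
    (α : ℕ → A) (k : ℕ) : VLDL.sat val kind (ttF V A) α k := by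
  simp only [ttF, VLDL.sat]
  exact em _

theorem not_sat_ffF {V A : Type} [Inhabited V] (val : V → A → Prop) (kind : A → SymKind)
    (α : ℕ → A) (k : ℕ) : ¬ VLDL.sat val kind (ffF V A) α k := by
  simp only [ffF, VLDL.sat]
  exact fun h => h.2 h.1

/-- Every move of `A_st` leaves state `0`; it either stays there and changes the stack height
according to the letter, or reads a return on the empty stack and enters state `1`. -/
theorem ast_step {A : Type} {kind : A → SymKind} {c c' : Fin 2 × List (Fin 1)} {a : A}
    (h : (AstData A).step kind c a c') :
    c.1 = 0 ∧
      ((c'.1 = 0 ∧ c'.2.length + (if kind a = .ret then 1 else 0) =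
          c.2.length + (if kind a = .call then 1 else 0)) ∨
        (c'.1 = 1 ∧ c.2 = [] ∧ kind a = .ret)) := by
  unfold VPAData.step vstep at h
  rcases hk : kind a <;> simp only [hk, AstData, decide_eq_true_eq] at h
  · obtain ⟨g, ⟨h0, h1⟩, h2⟩ := h
    simp [h0, h1, h2]
  · rcases h with ⟨g, s, h1, ⟨h0, h2⟩, h3⟩ | ⟨h1, ⟨h0, h2⟩, h3⟩
    · rcases h2 with ⟨-, h2⟩ | ⟨h2, -⟩
      · simp [h0, h1, h2, h3]
      · cases h2
    · rcases h2 with ⟨h2, -⟩ | ⟨-, h2⟩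
      · cases h2
      · simp [h0, h1, h2]
  · obtain ⟨⟨h0, h1⟩, h2⟩ := h
    simp [h0, h1, h2]

/-- As long as a run of `A_st` is in state `0`, its stack height is the number of calls minus
the number of returns read so far. -/
theorem run_invariant {A : Type} {kind : A → SymKind} {α : ℕ → A} {k l : ℕ}
    {ρ : ℕ → Fin 2 × List (Fin 1)} (h0 : (ρ k).2 = [])
    (hstep : ∀ i, k ≤ i → i < l → (AstData A).step kind (ρ i) (α i) (ρ (i + 1)))
    (i : ℕ) (hki : k ≤ i) (hil : i ≤ l) (hq : (ρ i).1 = 0) :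
    (ρ i).2.length + kindCount kind α .ret k i = kindCount kind α .call k i := by
  induction i, hki using Nat.le_induction with
  | base => simp [h0, kindCount_self]
  | succ i hki ih =>
    obtain ⟨hqi, ⟨-, hlen⟩ | ⟨h1, -⟩⟩ := ast_step (hstep i hki (by omega))
    · have := ih (by omega) hqi
      rw [kindCount_succ kind α _ hki, kindCount_succ kind α _ hki]
      omega
    · rw [hq] at h1
      exact absurd h1 (by decide)

/-- An accepting run of `A_st` on `α_k ⋯ α_{l-1}` makes the returns outnumber the calls there. -/
theorem lt_of_run {A : Type} {kind : A → SymKind} {α : ℕ → A} {k l : ℕ} (hkl : k ≤ l)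
    {ρ : ℕ → Fin 2 × List (Fin 1)} (hs : (ρ k).1 = 0) (h0 : (ρ k).2 = [])
    (hstep : ∀ i, k ≤ i → i < l → (AstData A).step kind (ρ i) (α i) (ρ (i + 1)))
    (hf : (ρ l).1 = 1) :
    k < l ∧ kindCount kind α .call k l < kindCount kind α .ret k l := by
  obtain rfl | hlt := hkl.eq_or_lt
  · rw [hs] at hf
    exact absurd hf (by decide)
  · obtain ⟨j, rfl⟩ : ∃ j, l = j + 1 := ⟨l - 1, by omega⟩
    have hkj : k ≤ j := by omega
    refine ⟨hlt, ?_⟩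
    obtain ⟨hqj, ⟨h1, -⟩ | ⟨-, he, hr⟩⟩ := ast_step (hstep j hkj (by omega))
    · rw [hf] at h1
      exact absurd h1 (by decide)
    · have := run_invariant h0 hstep j hkj (by omega) hqj
      rw [kindCount_succ kind α _ hkj, kindCount_succ kind α _ hkj]
      simp [he, hr] at this ⊢
      omega

/-- If `l` is the first position at which the returns outnumber the calls, then `A_st` has an
accepting run on `α_k ⋯ α_l`. -/
theorem run_of_first {A : Type} {kind : A → SymKind} {α : ℕ → A} {k l : ℕ} (hkl : k ≤ l)
    (hlt : kindCount kind α .call k (l + 1) < kindCount kind α .ret k (l + 1))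
    (hle : ∀ i, k ≤ i → i ≤ l → kindCount kind α .ret k i ≤ kindCount kind α .call k i) :
    ∃ ρ : ℕ → Fin 2 × List (Fin 1), (ρ k).1 = 0 ∧ (ρ k).2 = [] ∧
      (∀ i, k ≤ i → i < l + 1 → (AstData A).step kind (ρ i) (α i) (ρ (i + 1))) ∧
      (ρ (l + 1)).1 = 1 := by
  -- The subtraction does not truncate at positions `k ≤ i ≤ l`, by `hle`.
  refine ⟨fun i => if i ≤ l then
    (0, List.replicate (kindCount kind α .call k i - kindCount kind α .ret k i) 0)
    else (1, []), ?_, ?_, ?_, ?_⟩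
  · simp [hkl]
  · simp [hkl, kindCount_self]
  · intro i hki hil
    have hil' : i ≤ l := by omega
    have h1 := hle i hki hil'
    have hc := kindCount_succ kind α .call hki
    have hr := kindCount_succ kind α .ret hki
    obtain rfl | hlt' := hil'.eq_or_lt
    · have hret : kind (α i) = .ret := by
        by_contra hne
        simp only [hne, if_false] at hr
        omega
      simp only [hret, if_true, reduceCtorEq, if_false] at hc hr
      have he : kindCount kind α .call k i - kindCount kind α .ret k i = 0 := by omega
      simp [VPAData.step, vstep, hret, AstData, he]
    · have h2 := hle (i + 1) (by omega) hlt'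
      have hi1 : i + 1 ≤ l := hlt'
      unfold VPAData.step vstep
      rcases hk : kind (α i) <;> simp only [hk, if_true, reduceCtorEq, if_false] at hc hr <;>
        simp only [hil', hi1, if_true, AstData, decide_eq_true_eq]
      · refine ⟨0, by simp, ?_⟩
        rw [← List.replicate_succ]
        congr 1
        omega
      · refine Or.inl ⟨0, _, ?_, by simp, rfl⟩
        rw [← List.replicate_succ]
        congr 1
        omega
      · refine ⟨by simp, ?_⟩
        congr 1
        omega
  · simp

/-- The formula `φ_st = [A_st]ff` guarded by the fixed two-state
automaton `A_st` holds at position `k` of `α` if and only if for every `l ≥ k` the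
number of calls among `α_k ⋯ α_l` is at least the number of returns among `α_k ⋯ α_l`. -/
theorem phiSt_characterizes_steps (P : Type) [Fintype P] [Inhabited P]
    (kind : (P → Bool) → SymKind) (α : ℕ → (P → Bool)) (k : ℕ) :
    VLDL.sat (fun p a => a p = true) kind (phiSt P (P → Bool)) α k ↔
      ∀ l, k ≤ l →
        ((Finset.Icc k l).filter (fun i => kind (α i) = SymKind.ret)).card ≤
          ((Finset.Icc k l).filter (fun i => kind (α i) = SymKind.call)).card := by
  simp only [kindCount_Icc]
  constructor
  · intro hsat
    by_contra! hbad
    -- The first violation is the one the automaton detects.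
    classical
    obtain ⟨hkl, hlt⟩ := Nat.find_spec hbad
    have hmin := fun j => @Nat.find_min _ _ hbad j
    generalize Nat.find hbad = l at hkl hlt hmin
    have hle : ∀ i, k ≤ i → i ≤ l →
        kindCount kind α .ret k i ≤ kindCount kind α .call k i := by
      intro i hki hil
      obtain rfl | hlt' := hki.eq_or_lt
      · simp [kindCount_self]
      · obtain ⟨j, rfl⟩ : ∃ j, i = j + 1 := ⟨i - 1, by omega⟩
        by_contra! hj
        exact hmin j (by omega) ⟨by omega, hj⟩
    obtain ⟨ρ, hs, h0, hstep, hf⟩ := run_of_first hkl hlt hle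
    simp only [phiSt, VLDL.sat] at hsat
    exact not_sat_ffF _ _ _ _ (hsat (l + 1) (by omega)
      ⟨ρ, by simp [AstData, hs], h0, hstep, by simp [AstData, hf],
        fun i _ _ => sat_ttF _ _ _ _⟩)
  · intro h
    simp only [phiSt, VLDL.sat]
    rintro l hkl ⟨ρ, hs, h0, hstep, hf, -⟩
    obtain ⟨hlt, hcount⟩ := lt_of_run hkl (by simpa [AstData] using hs) h0 hstep
      (by simpa [AstData] using hf)
    obtain ⟨j, rfl⟩ : ∃ j, l = j + 1 := ⟨l - 1, by omega⟩
    exact absurd hcount (not_lt.mpr (h j (by omega)))
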